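/- arXiv:1604.01952 — 3 statements merged into one kernel-verified Lean document; each statement's English description precedes it below -/
import Mathlib

section
/- Let X ⊆ ℝ^k be an open convex set, let f : X → ℝ be differentiable and α-exp-concave for some α > 0, let H ⊆ ℝ^m be a nonempty compact convex set with ‖v − w‖ ≤ D for all v, w ∈ H (D > 0), let A be a k×m real matrix and b ∈ ℝ^k with A·w + b ∈ X for all w ∈ H, and suppose ‖Aᵀ∇f(x)‖ ≤ E for all x ∈ X (E > 0). Define g : H → ℝ by g(w) = f(A·w + b). If 0 < β ≤ (1/2)·min{1/(4DE), α}, then for all v, w ∈ H: g(v) ≥ g(w) + ⟨∇g(w), v − w⟩ + (β/2)·⟨∇g(w), w − v⟩², where ∇g(w) = Aᵀ∇f(A·w + b). -/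
open scoped RealInnerProductSpace

/-- Elementary logarithm bound: `1 - z ≤ exp (-(z + z^2/4))` for `|z| ≤ 1/4`. -/
theorem aux_exp_bound (z : ℝ) (hz : |z| ≤ 1/4) : 1 - z ≤ Real.exp (-(z + z^2/4)) := by
  obtain ⟨h1, h2⟩ := abs_le.mp hz
  set t := z + z^2/4 with ht
  have htabs : |t| ≤ 5/16 := by
    rw [abs_le]; constructor <;> nlinarith
  have hb := Real.exp_bound (x := -t) (by rw [abs_neg]; linarith) (n := 3) (by norm_num)
  have hb' := (abs_le.mp hb).1
  simp only [Finset.sum_range_succ, Finset.sum_range_zero, abs_neg, Nat.factorial] at hb'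
  norm_num at hb'
  have hc : |t|^3 ≤ 5/16 * t^2 := by
    have : |t|^3 = |t| * t^2 := by rw [← sq_abs t]; ring
    rw [this]
    exact mul_le_mul_of_nonneg_right htabs (sq_nonneg t)
  have ht2 : (15/16)^2 * z^2 ≤ t^2 := by
    have : t^2 = (1+z/4)^2 * z^2 := by rw [ht]; ring
    rw [this]
    apply mul_le_mul_of_nonneg_right _ (sq_nonneg z)
    nlinarith
  nlinarith [sq_nonneg z]

/-- First-order inequality for exp-concave functions. -/
theorem aux_first_order {F : Type*} [NormedAddCommGroup F] [InnerProductSpace ℝ F]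
    [CompleteSpace F] (X : Set F) (f : F → ℝ) (p : F) (x y : F)
    (hx : x ∈ X) (hy : y ∈ X) (hf : HasGradientAt f p y) (α : ℝ)
    (hexp : ConcaveOn ℝ X (fun x => Real.exp (-α * f x))) :
    Real.exp (-α * f x) ≤ Real.exp (-α * f y) * (1 - α * inner ℝ p (x - y)) := by
  have hconc := hexp.comp_affineMap (AffineMap.lineMap y x : ℝ →ᵃ[ℝ] F)
  have hd : HasDerivAt ((fun x => Real.exp (-α * f x)) ∘ (AffineMap.lineMap y x : ℝ →ᵃ[ℝ] F))
      (Real.exp (-α * f y) * (-α * inner ℝ p (x - y))) 0 := by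
    have hl : HasDerivAt (AffineMap.lineMap y x : ℝ →ᵃ[ℝ] F) (x - y) (0:ℝ) :=
      AffineMap.hasDerivAt_lineMap
    have hf1 : HasFDerivAt f (InnerProductSpace.toDual ℝ F p)
        ((AffineMap.lineMap y x : ℝ →ᵃ[ℝ] F) 0) := by
      rw [AffineMap.lineMap_apply_zero]; exact hf.hasFDerivAt
    have h2 := ((hf1.comp_hasDerivAt (0:ℝ) hl).const_mul (-α)).exp
    simpa [Function.comp_def] using h2
  have h := hconc.slope_le_of_hasDerivAt (x := 0) (y := 1) (by simpa using hy) (by simpa using hx)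
    one_pos hd
  simp [slope_def_field] at h
  simp
  linarith

/-- **Exp-concave composition lemma (Lemma for Online Newton Step).**
Let `X ⊆ ℝ^k` be open convex, `f : X → ℝ` differentiable and `α`-exp-concave
(`x ↦ exp (-α * f x)` is concave on `X`), `H ⊆ ℝ^m` nonempty compact convex of
diameter at most `D > 0`, `A` a `k × m` matrix and `b ∈ ℝ^k` with `A·w + b ∈ X`
for `w ∈ H`, and `‖A.transpose∇f(x)‖ ≤ E` on `X`.  If `0 < β ≤ (1/2)·min {1/(4DE), α}`
then for `g(w) = f(A·w + b)` and all `v, w ∈ H`: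
`g v ≥ g w + ⟪∇g w, v - w⟫ + (β/2)·⟪∇g w, w - v⟫²` where `∇g w = A.transpose∇f(A·w + b)`. -/
theorem expConcave_affine_composition_lower_bound
    {k m : ℕ} (X : Set (EuclideanSpace ℝ (Fin k)))
    (hXopen : IsOpen X) (hXconv : Convex ℝ X)
    (f : EuclideanSpace ℝ (Fin k) → ℝ)
    (f' : EuclideanSpace ℝ (Fin k) → EuclideanSpace ℝ (Fin k))
    (hf : ∀ x ∈ X, HasGradientAt f (f' x) x)
    (α : ℝ) (hα : 0 < α)
    (hexp : ConcaveOn ℝ X (fun x => Real.exp (-α * f x)))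
    (H : Set (EuclideanSpace ℝ (Fin m)))
    (hHne : H.Nonempty) (hHcomp : IsCompact H) (hHconv : Convex ℝ H)
    (D : ℝ) (hD : 0 < D) (hdiam : ∀ v ∈ H, ∀ w ∈ H, ‖v - w‖ ≤ D)
    (A : Matrix (Fin k) (Fin m) ℝ) (b : EuclideanSpace ℝ (Fin k))
    (hAb : ∀ w ∈ H, Matrix.toEuclideanLin A w + b ∈ X)
    (E : ℝ) (hE : 0 < E)
    (hgrad : ∀ x ∈ X, ‖Matrix.toEuclideanLin A.transpose (f' x)‖ ≤ E)
    (β : ℝ) (hβ0 : 0 < β) (hβ : β ≤ (1/2) * min (1/(4*D*E)) α) :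
    ∀ v ∈ H, ∀ w ∈ H,
      f (Matrix.toEuclideanLin A v + b) ≥
        f (Matrix.toEuclideanLin A w + b)
        + ⟪Matrix.toEuclideanLin A.transpose (f' (Matrix.toEuclideanLin A w + b)), v - w⟫
        + (β/2) * ⟪Matrix.toEuclideanLin A.transpose (f' (Matrix.toEuclideanLin A w + b)), w - v⟫^2 := by
  intro v hv w hw
  set y := Matrix.toEuclideanLin A w + b with hy
  set x := Matrix.toEuclideanLin A v + b with hx
  have hyX : y ∈ X := hAb w hw
  have hxX : x ∈ X := hAb v hv
  have hadj : ⟪Matrix.toEuclideanLin A.transpose (f' y), v - w⟫ = ⟪f' y, x - y⟫ := by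
    have h1 : x - y = Matrix.toEuclideanLin A (v - w) := by
      rw [hx, hy, map_sub]; abel
    rw [h1, ← Matrix.conjTranspose_eq_transpose_of_trivial,
      Matrix.toEuclideanLin_conjTranspose_eq_adjoint, LinearMap.adjoint_inner_left]
  have hfo := aux_first_order X f (f' y) x y hxX hyX (hf y hyX) α hexp
  rw [← hadj] at hfo
  have hdabs : |⟪Matrix.toEuclideanLin A.transpose (f' y), v - w⟫| ≤ E * D :=
    (abs_real_inner_le_norm _ _).trans
      (mul_le_mul (hgrad y hyX) (hdiam v hv w hw) (norm_nonneg _) hE.le)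
  have hneg : ⟪Matrix.toEuclideanLin A.transpose (f' y), w - v⟫
      = -⟪Matrix.toEuclideanLin A.transpose (f' y), v - w⟫ := by
    rw [← inner_neg_right, neg_sub]
  rw [hneg, neg_sq]
  set d := ⟪Matrix.toEuclideanLin A.transpose (f' y), v - w⟫ with hd
  have hβα : 2 * β ≤ α := by linarith [min_le_right (1/(4*D*E)) α]
  have hβDE : 2 * β ≤ 1/(4*D*E) := by linarith [min_le_left (1/(4*D*E)) α]
  have hDE : 0 < D * E := mul_pos hD hE
  have hz : |2 * β * d| ≤ 1/4 := by
    rw [abs_mul, abs_of_pos (by linarith : 0 < 2 * β)]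
    rw [le_div_iff₀ (by positivity)] at hβDE
    have := mul_le_mul_of_nonneg_left hdabs (by linarith : 0 ≤ 2 * β)
    nlinarith
  have h1 : Real.exp (-α * (f x - f y)) ≤ 1 - α * d := by
    have : -α * (f x - f y) = -α * f x - (-α * f y) := by ring
    rw [this, Real.exp_sub, div_le_iff₀ (Real.exp_pos _)]
    linarith
  have hpos := Real.exp_pos (-α * (f x - f y))
  have h2 : Real.exp (-(2 * β) * (f x - f y)) ≤ 1 - 2 * β * d := by
    have hr := Real.rpow_le_rpow hpos.le h1 (by positivity : 0 ≤ 2 * β / α)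
    have hB := rpow_one_add_le_one_add_mul_self (s := -(α * d)) (by linarith)
      (by positivity : 0 ≤ 2 * β / α) (by rw [div_le_one hα]; exact hβα)
    rw [← Real.exp_mul] at hr
    have e1 : -α * (f x - f y) * (2 * β / α) = -(2 * β) * (f x - f y) := by field_simp
    have e2 : 2 * β / α * -(α * d) = -(2 * β * d) := by field_simp
    rw [e1] at hr
    rw [e2, ← sub_eq_add_neg, ← sub_eq_add_neg] at hB
    linarith
  have h3 := Real.exp_le_exp.mp (h2.trans (aux_exp_bound _ hz))
  have h4 : 2 * β * (d + β / 2 * d^2) ≤ 2 * β * (f x - f y) := by nlinarith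
  have h5 := le_of_mul_le_mul_left h4 (by linarith : 0 < 2 * β)
  linarith
end

section
/- Let K ⊆ ℝ^d be a nonempty closed convex set, let ℓ : ℝ^d → ℝ be convex and differentiable, let η > 0, let w ∈ K and set w' = Π_K(w − η·∇ℓ(w)). Then for every u ∈ K: ℓ(w) − ℓ(u) ≤ (‖w − u‖² − ‖w' − u‖²)/(2η) + (η/2)·‖∇ℓ(w)‖². -/
/-- `p` is the Euclidean (metric) projection of `y` onto `K`: the point of `K`
nearest to `y`. -/
def IsProjection {E : Type*} [NormedAddCommGroup E] (K : Set E) (y p : E) : Prop :=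
  p ∈ K ∧ ∀ v ∈ K, ‖p - y‖ ≤ ‖v - y‖

/-- **One-step descent lemma for projected gradient descent.**
Let `K ⊆ ℝ^d` be nonempty closed convex, `ℓ` convex and differentiable, `η > 0`,
`w ∈ K` and `w' = Π_K (w - η • ∇ℓ w)`.  Then for every `u ∈ K`:
`ℓ w - ℓ u ≤ (‖w - u‖² - ‖w' - u‖²)/(2η) + (η/2)·‖∇ℓ w‖²`. -/
theorem projected_gradient_step_bound
    {d : ℕ} (K : Set (EuclideanSpace ℝ (Fin d)))
    (hKne : K.Nonempty) (hKcl : IsClosed K) (hKconv : Convex ℝ K)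
    (ℓ : EuclideanSpace ℝ (Fin d) → ℝ)
    (ℓ' : EuclideanSpace ℝ (Fin d) → EuclideanSpace ℝ (Fin d))
    (hconv : ConvexOn ℝ Set.univ ℓ)
    (hgrad : ∀ v, HasGradientAt ℓ (ℓ' v) v)
    (η : ℝ) (hη : 0 < η)
    (w w' : EuclideanSpace ℝ (Fin d)) (hw : w ∈ K)
    (hproj : IsProjection K (w - η • ℓ' w) w') :
    ∀ u ∈ K,
      ℓ w - ℓ u ≤ (‖w - u‖^2 - ‖w' - u‖^2)/(2*η) + (η/2) * ‖ℓ' w‖^2 := by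
  intro u hu
  -- first-order convexity inequality
  have h1 : inner ℝ (ℓ' w) (u - w) ≤ ℓ u - ℓ w := by
    have hc : ConvexOn ℝ Set.univ (ℓ ∘ (AffineMap.lineMap w u : ℝ →ᵃ[ℝ] _)) := by
      simpa using hconv.comp_affineMap (AffineMap.lineMap w u : ℝ →ᵃ[ℝ] _)
    have hd : HasDerivAt (ℓ ∘ (AffineMap.lineMap w u : ℝ →ᵃ[ℝ] _))
        (inner ℝ (ℓ' w) (u - w)) 0 := by
      have hl : HasDerivAt (AffineMap.lineMap w u : ℝ →ᵃ[ℝ] _) (u - w) (0 : ℝ) :=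
        AffineMap.hasDerivAt_lineMap
      have hg : HasFDerivAt ℓ (InnerProductSpace.toDual ℝ _ (ℓ' w))
          ((AffineMap.lineMap w u : ℝ →ᵃ[ℝ] _) (0 : ℝ)) := by
        simpa using (hgrad w).hasFDerivAt
      simpa using hg.comp_hasDerivAt (0 : ℝ) hl
    have := hc.le_slope_of_hasDerivAt (Set.mem_univ 0) (Set.mem_univ 1) zero_lt_one hd
    simpa [slope_def_field] using this
  -- obtuse-angle characterization of the projection
  obtain ⟨hw', hmin⟩ := hproj
  have h2 : inner ℝ ((w - η • ℓ' w) - w') (u - w') ≤ 0 := by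
    refine (norm_eq_iInf_iff_real_inner_le_zero hKconv hw').1 ?_ u hu
    have : Nonempty K := ⟨⟨w', hw'⟩⟩
    apply le_antisymm
    · refine le_ciInf fun v => ?_
      rw [norm_sub_rev, norm_sub_rev _ (v : EuclideanSpace ℝ (Fin d))]
      exact hmin v v.2
    · exact ciInf_le (f := fun v : K => ‖w - η • ℓ' w - v‖)
        ⟨0, by rintro _ ⟨v, rfl⟩; exact norm_nonneg _⟩ ⟨w', hw'⟩
  have h3 : ‖w' - u‖^2 ≤ ‖(w - u) - η • ℓ' w‖^2 := by
    have e : (w - u) - η • ℓ' w = ((w - η • ℓ' w) - w') - (u - w') := by abel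
    rw [e, norm_sub_sq_real ((w - η • ℓ' w) - w'), norm_sub_rev w' u]
    nlinarith [sq_nonneg ‖(w - η • ℓ' w) - w'‖]
  rw [norm_sub_sq_real (w - u), inner_smul_right, norm_smul, mul_pow, Real.norm_eq_abs, sq_abs,
    real_inner_comm] at h3
  have h4 : inner ℝ (ℓ' w) (u - w) = - inner ℝ (ℓ' w) (w - u) := by
    rw [← inner_neg_right, neg_sub]
  have h5 : ℓ w - ℓ u ≤ inner ℝ (ℓ' w) (w - u) := by linarith
  refine h5.trans ?_
  have e : (‖w - u‖^2 - ‖w' - u‖^2)/(2*η) + (η/2) * ‖ℓ' w‖^2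
      = (‖w - u‖^2 - ‖w' - u‖^2 + η^2 * ‖ℓ' w‖^2)/(2*η) := by
    field_simp
  rw [e, le_div_iff₀ (by positivity)]
  linarith
end

section
/- (Online Newton Step / NProp regret bound.) Let K ⊆ ℝ^d be a nonempty compact convex set with ‖x − y‖ ≤ D for all x, y ∈ K (D > 0), let α, L > 0, and set β = (1/2)·min{1/(4DL), α}. For t = 1,…,T let g^t : ℝ^d → ℝ be differentiable with ‖∇g^t(w)‖ ≤ L for all w ∈ K and satisfying the curvature condition g^t(v) ≥ g^t(w) + ⟨∇g^t(w), v − w⟩ + (β/2)·⟨∇g^t(w), w − v⟩² for all v, w ∈ K. Run: w^1 ∈ K, A^0 = (1/(β²D²))·I_d; on round t, with ∇^t := ∇g^t(w^t), set A^t = A^{t−1} + ∇^t(∇^t)ᵀ, y^t = w^t − (1/β)·(A^t)^{−1}·∇^t, and let w^{t+1} be the point of K minimizing v ↦ ⟨v − y^t, A^t·(v − y^t)⟩. Then each A^t is positive definite (hence invertible), and for every u ∈ K and every T ≥ 4: ∑_{t=1}^T ( g^t(w^t) − g^t(u) ) ≤ 5·d·(1/α + L·D)·log T. -/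
open scoped RealInnerProductSpace
section
open Matrix
theorem proj_aux {E : Type*} [NormedAddCommGroup E] [InnerProductSpace ℝ E] (M : E →ₗ[ℝ] E)
    (hs : ∀ x y, ⟪x, M y⟫ = ⟪y, M x⟫) (hpos : ∀ x, 0 ≤ ⟪x, M x⟫) (K : Set E) (hK : Convex ℝ K)
    (p u y : E) (hp : p ∈ K) (hu : u ∈ K)
    (hmin : ∀ v ∈ K, ⟪p - y, M (p - y)⟫ ≤ ⟪v - y, M (v - y)⟫) :
    ⟪p - u, M (p - u)⟫ ≤ ⟪y - u, M (y - u)⟫ := by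
  have key : ∀ s : ℝ, ⟪(p + s • (u - p)) - y, M ((p + s • (u - p)) - y)⟫
      = ⟪p - y, M (p - y)⟫ + 2 * s * ⟪u - p, M (p - y)⟫ + s^2 * ⟪u - p, M (u - p)⟫ := by
    intro s
    have e : (p + s • (u - p)) - y = (p - y) + s • (u - p) := by abel
    rw [e, map_add, map_smul, inner_add_left, inner_add_right, inner_add_right,
      inner_smul_left, inner_smul_right, inner_smul_right, inner_smul_left, hs (p-y) (u-p)]
    simp; ring
  have hb := hpos (u - p)
  have ha : 0 ≤ ⟪u - p, M (p - y)⟫ := by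
    by_contra! h
    set a := ⟪u - p, M (p - y)⟫
    set b := ⟪u - p, M (u - p)⟫
    have hba : 0 < b - a := by linarith
    have hs0 : 0 < -a / (b - a) := div_pos (by linarith) hba
    have hs1 : -a / (b - a) ≤ 1 := by rw [div_le_one hba]; linarith
    have hm := hmin _ (hK.add_smul_sub_mem hp hu ⟨hs0.le, hs1⟩)
    rw [key] at hm
    have h3 : (-a / (b - a)) * (b - a) = -a := div_mul_cancel₀ _ hba.ne'
    set s := -a / (b - a)
    have : 0 ≤ s * (2 * a + s * b) := by nlinarith
    have : 0 ≤ 2 * a + s * b := nonneg_of_mul_nonneg_right this hs0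
    nlinarith
  have h1 := key 1
  have e1 : p + (1:ℝ) • (u - p) - y = -(y - u) := by simp
  have e2 : p - u = -(u - p) := by simp
  rw [e1] at h1
  rw [e2]
  have := hpos (p - y)
  simp only [map_neg, inner_neg_left, inner_neg_right, neg_neg] at h1 ⊢
  linarith

theorem inner_lin_aux {d : ℕ} (A : Matrix (Fin d) (Fin d) ℝ) (x y : EuclideanSpace ℝ (Fin d)) :
    ⟪x, Matrix.toEuclideanLin A y⟫ = x.ofLp ⬝ᵥ (A *ᵥ y.ofLp) := by
  rw [EuclideanSpace.inner_eq_star_dotProduct, dotProduct_comm]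
  simp [Matrix.ofLp_toLpLin]

theorem posDef_step {d : ℕ} (A : Matrix (Fin d) (Fin d) ℝ) (hA : A.PosDef) (v : Fin d → ℝ) :
    (A + vecMulVec v v).PosDef := by
  have := posSemidef_vecMulVec_self_star v
  rw [star_trivial] at this
  exact hA.add_posSemidef this

theorem logdet_step {d : ℕ} (A : Matrix (Fin d) (Fin d) ℝ) (hA : A.PosDef) (v : Fin d → ℝ) :
    v ⬝ᵥ ((A + vecMulVec v v)⁻¹ *ᵥ v) ≤
      Real.log (A + vecMulVec v v).det - Real.log A.det := by
  have hB := posDef_step A hA v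
  set B := A + vecMulVec v v with hBd
  have hAB : A = B + replicateCol Unit (-v) * replicateRow Unit v := by
    rw [hBd, ← vecMulVec_eq, neg_vecMulVec]; abel
  have hdet := det_add_replicateCol_mul_replicateRow (ι := Unit) (A := B) hB.det_pos.ne'.isUnit (-v) v
  rw [← hAB] at hdet
  have h2 : (1 + replicateRow Unit v * B⁻¹ * replicateCol Unit (-v)).det = 1 - v ⬝ᵥ (B⁻¹ *ᵥ v) := by
    rw [Matrix.mul_assoc, ← replicateCol_mulVec]
    simp [det_unique, Matrix.mul_apply, dotProduct, mulVec_neg, sub_eq_add_neg]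
  rw [h2] at hdet
  have ha := hA.det_pos
  have hb := hB.det_pos
  have h1 : 0 < 1 - v ⬝ᵥ (B⁻¹ *ᵥ v) := by
    rw [hdet] at ha; exact (pos_iff_pos_of_mul_pos ha).1 hb
  rw [hdet, Real.log_mul hb.ne' h1.ne']
  have := Real.log_le_sub_one_of_pos h1
  linarith

theorem logdet_le {d : ℕ} (A : Matrix (Fin d) (Fin d) ℝ) (hA : A.PosDef) (s : ℝ) (hs : 0 < s)
    (htr : A.trace ≤ d * s) : Real.log A.det ≤ d * Real.log s := by
  rw [hA.isHermitian.trace_eq_sum_eigenvalues] at htr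
  rw [hA.isHermitian.det_eq_prod_eigenvalues]
  simp only [RCLike.ofReal_real_eq_id, id] at htr ⊢
  rw [Real.log_prod (fun i _ => (hA.eigenvalues_pos i).ne')]
  have : ∀ i ∈ Finset.univ, Real.log (hA.isHermitian.eigenvalues i) ≤
      hA.isHermitian.eigenvalues i / s - 1 + Real.log s := by
    intro i _
    have := Real.log_le_sub_one_of_pos (div_pos (hA.eigenvalues_pos i) hs)
    rw [Real.log_div (hA.eigenvalues_pos i).ne' hs.ne'] at this
    linarith
  refine (Finset.sum_le_sum this).trans ?_
  rw [Finset.sum_add_distrib, Finset.sum_sub_distrib, ← Finset.sum_div]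
  simp only [Finset.sum_const, Finset.card_univ, Fintype.card_fin, nsmul_eq_mul, mul_one]
  have : (∑ i, hA.isHermitian.eigenvalues i) / s ≤ d := by rw [div_le_iff₀ hs]; exact htr
  linarith

theorem newton_step {d : ℕ} (A : Matrix (Fin d) (Fin d) ℝ) (hA : A.PosDef) (β : ℝ) (hβ : 0 < β)
    (K : Set (EuclideanSpace ℝ (Fin d))) (hK : Convex ℝ K)
    (w y p u G : EuclideanSpace ℝ (Fin d)) (hu : u ∈ K) (hp : p ∈ K)
    (hy : y = w - (1/β) • (Matrix.toEuclideanLin A⁻¹ G))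
    (hmin : ∀ v ∈ K, ⟪p - y, Matrix.toEuclideanLin A (p - y)⟫ ≤
      ⟪v - y, Matrix.toEuclideanLin A (v - y)⟫) :
    ⟪G, w - u⟫ ≤ 1/(2*β) * (G.ofLp ⬝ᵥ (A⁻¹ *ᵥ G.ofLp)) +
      β/2 * (⟪w - u, Matrix.toEuclideanLin A (w - u)⟫ -
        ⟪p - u, Matrix.toEuclideanLin A (p - u)⟫) := by
  have hsym := isSymmetric_toEuclideanLin_iff.mpr hA.isHermitian
  have hs : ∀ x y, ⟪x, Matrix.toEuclideanLin A y⟫ = ⟪y, Matrix.toEuclideanLin A x⟫ := by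
    intro x y
    rw [← hsym x y, real_inner_comm]
  have hpos : ∀ x, 0 ≤ ⟪x, Matrix.toEuclideanLin A x⟫ := by
    intro x
    rw [inner_lin_aux]
    simpa using hA.posSemidef.dotProduct_mulVec_nonneg x.ofLp
  have h := proj_aux _ hs hpos K hK p u y hp hu hmin
  have hinv : Matrix.toEuclideanLin A (Matrix.toEuclideanLin A⁻¹ G) = G := by
    apply (WithLp.ofLp_injective 2)
    simp [Matrix.ofLp_toLpLin, Matrix.mul_nonsing_inv A hA.det_pos.ne'.isUnit]
  have e : y - u = (w - u) - (1/β) • (Matrix.toEuclideanLin A⁻¹ G) := by rw [hy]; abel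
  rw [← inner_lin_aux]
  have hexp : ⟪y - u, Matrix.toEuclideanLin A (y - u)⟫ =
      ⟪w - u, Matrix.toEuclideanLin A (w - u)⟫ - 2 / β * ⟪G, w - u⟫
        + 1 / β^2 * ⟪G, Matrix.toEuclideanLin A⁻¹ G⟫ := by
    have h1 : ⟪Matrix.toEuclideanLin A⁻¹ G, Matrix.toEuclideanLin A (w - u)⟫ = ⟪G, w - u⟫ := by
      rw [hs, hinv, real_inner_comm]
    rw [e, map_sub (Matrix.toEuclideanLin A) (w - u), map_smul, hinv, inner_sub_left,
      inner_sub_right, inner_sub_right, inner_smul_left, inner_smul_left, inner_smul_right,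
      inner_smul_right, h1, real_inner_comm G (w - u),
      real_inner_comm G (Matrix.toEuclideanLin A⁻¹ G)]
    simp only [conj_trivial]
    ring
  rw [hexp] at h
  set a := ⟪G, w - u⟫
  set q := ⟪G, Matrix.toEuclideanLin A⁻¹ G⟫
  set x := ⟪w - u, Matrix.toEuclideanLin A (w - u)⟫
  set z := ⟪p - u, Matrix.toEuclideanLin A (p - u)⟫
  have h5 : β/2 * z ≤ β/2 * x - a + 1/(2*β) * q := by
    refine (mul_le_mul_of_nonneg_left h (by positivity : 0 ≤ β/2)).trans (le_of_eq ?_)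
    field_simp
  linarith

theorem trace_bound {d : ℕ} (A : ℕ → Matrix (Fin d) (Fin d) ℝ)
    (G : ℕ → EuclideanSpace ℝ (Fin d)) (c L : ℝ) (T : ℕ)
    (hA0 : A 0 = c • (1 : Matrix (Fin d) (Fin d) ℝ))
    (hA : ∀ t, A (t+1) = A t + vecMulVec (G (t+1)) (G (t+1)))
    (hG : ∀ t ∈ Finset.Icc 1 T, ‖G t‖ ≤ L) :
    ∀ n ≤ T, (A n).trace ≤ d * c + n * L^2 := by
  intro n
  induction n with
  | zero => intro _; simp [hA0, mul_comm]
  | succ n ih =>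
    intro hn
    have h1 := ih (by omega)
    have h2 := hG (n+1) (by simp; omega)
    have h3 : (G (n+1)).ofLp ⬝ᵥ (G (n+1)).ofLp = ‖G (n+1)‖^2 := by
      rw [← real_inner_self_eq_norm_sq, EuclideanSpace.inner_eq_star_dotProduct, star_trivial]
    rw [hA, trace_add, trace_vecMulVec, h3]
    have := pow_le_pow_left₀ (norm_nonneg _) h2 2
    push_cast
    linarith

theorem final_arith (d : ℕ) (hd : 1 ≤ d) (α L D β : ℝ) (hα : 0 < α) (hL : 0 < L) (hD : 0 < D)
    (hβ : β = (1/2) * min (1/(4*D*L)) α) (hβ0 : 0 < β) (T : ℕ) (hT : 4 ≤ T) (R : ℝ)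
    (hR : R ≤ 1/(2*β) * (d * Real.log (1 + T * (L * β * D)^2) + 1)) :
    R ≤ 5 * d * (1/α + L * D) * Real.log T := by
  have hT' : (4:ℝ) ≤ T := by exact_mod_cast hT
  have hd' : (1:ℝ) ≤ d := by exact_mod_cast hd
  have hDL : 0 < D * L := by positivity
  have h1 : L * β * D ≤ 1/8 := by
    have : β ≤ (1/2) * (1/(4*D*L)) := by rw [hβ]; gcongr; exact min_le_left _ _
    calc L * β * D = D * L * β := by ring
      _ ≤ D * L * ((1/2) * (1/(4*D*L))) := by gcongr
      _ = 1/8 := by field_simp; norm_num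
  have h2 : (L * β * D)^2 ≤ 1/64 := by
    have := pow_le_pow_left₀ (by positivity) h1 2
    linarith
  have h3 : 1 + T * (L * β * D)^2 ≤ T / 2 := by nlinarith
  have h4 : Real.log (1 + T * (L * β * D)^2) ≤ Real.log T - Real.log 2 := by
    rw [← Real.log_div (by positivity) (by norm_num)]
    exact Real.log_le_log (by positivity) h3
  have h5 : 2 * Real.log 2 ≤ Real.log T := by
    have : Real.log 4 = 2 * Real.log 2 := by
      rw [show (4:ℝ) = 2^2 by norm_num, Real.log_pow]; norm_num
    rw [← this]
    exact Real.log_le_log (by norm_num) hT'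
  have h6 := Real.log_two_gt_d9
  have h7 : 1/(2*β) ≤ 4 * (1/α + L * D) := by
    rw [div_le_iff₀ (by positivity)]
    have hLD : 0 < L * D := by positivity
    have ha : 0 < 1/α := by positivity
    rcases min_choice (1/(4*D*L)) α with h | h
    · rw [h] at hβ
      have : L * D * β = 1/8 := by rw [hβ]; field_simp; norm_num
      have : 0 < 1/α * β := by positivity
      nlinarith
    · rw [h] at hβ
      have : 1/α * β = 1/2 := by rw [hβ]; field_simp
      have : 0 < L * D * β := by positivity
      nlinarith
  have hlog : 0 ≤ Real.log (1 + T * (L * β * D)^2) := Real.log_nonneg (by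
    have : 0 ≤ T * (L * β * D)^2 := by positivity
    linarith)
  have hC : 0 < 1/α + L * D := by positivity
  calc R ≤ _ := hR
    _ ≤ 4 * (1/α + L * D) * (d * Real.log (1 + T * (L * β * D)^2) + 1) := by gcongr
    _ ≤ 4 * (1/α + L * D) * (d * (Real.log T - Real.log 2) + d * 1) := by gcongr; linarith
    _ = d * (1/α + L * D) * (4 * (Real.log T - Real.log 2) + 4) := by ring
    _ ≤ d * (1/α + L * D) * (5 * Real.log T) := by gcongr; linarith
    _ = _ := by ring

end

/-- **Online Newton Step / `NProp` regret bound.**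
Let `K ⊆ ℝ^d` be nonempty compact convex with diameter at most `D > 0`, let
`α, L > 0` and `β = (1/2)·min {1/(4DL), α}`.  On rounds `t = 1, …, T` the losses
`g t` are differentiable with gradients bounded by `L` on `K` and satisfy the
exp-concavity curvature condition
`g t v ≥ g t w + ⟪∇g t w, v - w⟫ + (β/2)·⟪∇g t w, w - v⟫²` on `K`.
The algorithm starts at `w 1 ∈ K` with `A 0 = (1/(β²D²))·I`, and on round `t` sets
`A t = A (t-1) + ∇ᵗ(∇ᵗ)ᵀ`, `y t = w t - (1/β)·(A t)⁻¹·∇ᵗ` and lets `w (t+1)` be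
the point of `K` minimizing `v ↦ ⟪v - y t, A t · (v - y t)⟫`.  Then each `A t` is
positive definite and for every `u ∈ K` and `T ≥ 4`:
`∑_{t=1}^T (g t (w t) - g t u) ≤ 5·d·(1/α + L·D)·log T`. -/
theorem online_newton_step_regret
    {d : ℕ} (K : Set (EuclideanSpace ℝ (Fin d)))
    (hKne : K.Nonempty) (hKcomp : IsCompact K) (hKconv : Convex ℝ K)
    (D : ℝ) (hD : 0 < D) (hdiam : ∀ x ∈ K, ∀ y ∈ K, ‖x - y‖ ≤ D)
    (α L : ℝ) (hα : 0 < α) (hL : 0 < L)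
    (β : ℝ) (hβ : β = (1/2) * min (1/(4*D*L)) α)
    (T : ℕ)
    (g : ℕ → EuclideanSpace ℝ (Fin d) → ℝ)
    (g' : ℕ → EuclideanSpace ℝ (Fin d) → EuclideanSpace ℝ (Fin d))
    (hg : ∀ t ∈ Finset.Icc 1 T, ∀ v, HasGradientAt (g t) (g' t v) v)
    (hgL : ∀ t ∈ Finset.Icc 1 T, ∀ v ∈ K, ‖g' t v‖ ≤ L)
    (hcurv : ∀ t ∈ Finset.Icc 1 T, ∀ v ∈ K, ∀ w ∈ K,
      g t v ≥ g t w + ⟪g' t w, v - w⟫ + (β/2) * ⟪g' t w, w - v⟫^2)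
    (w : ℕ → EuclideanSpace ℝ (Fin d)) (hw1 : w 1 ∈ K)
    (A : ℕ → Matrix (Fin d) (Fin d) ℝ)
    (hA0 : A 0 = (1/(β^2 * D^2)) • (1 : Matrix (Fin d) (Fin d) ℝ))
    (hA : ∀ t, A (t+1) =
      A t + Matrix.vecMulVec (g' (t+1) (w (t+1))) (g' (t+1) (w (t+1))))
    (y : ℕ → EuclideanSpace ℝ (Fin d))
    (hy : ∀ t, y t = w t - (1/β) • (Matrix.toEuclideanLin (A t)⁻¹ (g' t (w t))))
    (hproj : ∀ t ∈ Finset.Icc 1 T, w (t+1) ∈ K ∧ ∀ v ∈ K,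
      ⟪w (t+1) - y t, Matrix.toEuclideanLin (A t) (w (t+1) - y t)⟫ ≤
        ⟪v - y t, Matrix.toEuclideanLin (A t) (v - y t)⟫) :
    (∀ t, (A t).PosDef) ∧
    ∀ u ∈ K, 4 ≤ T →
      ∑ t ∈ Finset.Icc 1 T, (g t (w t) - g t u) ≤
        5 * d * (1/α + L * D) * Real.log T := by
  have hβ0 : 0 < β := by rw [hβ]; positivity
  have hPD : ∀ t, (A t).PosDef := by
    intro t
    induction t with
    | zero => rw [hA0]; exact Matrix.PosDef.one.smul (by positivity)
    | succ n ih => rw [hA]; exact posDef_step _ ih _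
  refine ⟨hPD, ?_⟩
  intro u hu hT
  have hwK : ∀ t ∈ Finset.Icc 1 T, w t ∈ K := by
    intro t ht
    obtain ⟨h1, h2⟩ := Finset.mem_Icc.1 ht
    rcases Nat.exists_eq_add_of_le' h1 with ⟨m, rfl⟩
    rcases Nat.eq_zero_or_pos m with rfl | hm
    · exact hw1
    · exact (hproj m (Finset.mem_Icc.2 ⟨hm, by omega⟩)).1
  rcases Nat.eq_zero_or_pos d with rfl | hd
  · have : ∀ t, w t = u := fun t => Subsingleton.elim _ _
    simp [this]
  have hmain : ∀ n ≤ T, ∑ t ∈ Finset.Icc 1 n, (g t (w t) - g t u) ≤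
      1/(2*β) * (Real.log (A n).det - Real.log (A 0).det) +
      β/2 * (⟪w 1 - u, Matrix.toEuclideanLin (A 0) (w 1 - u)⟫ -
        ⟪w (n+1) - u, Matrix.toEuclideanLin (A n) (w (n+1) - u)⟫) := by
    intro n
    induction n with
    | zero => intro _; simp
    | succ n ih =>
      intro hn
      have hmem : n + 1 ∈ Finset.Icc 1 T := Finset.mem_Icc.2 ⟨by omega, hn⟩
      have h1 := ih (by omega)
      rw [Finset.sum_Icc_succ_top (by omega)]
      have h2 := hcurv (n+1) hmem u hu _ (hwK _ hmem)
      have h3 := newton_step (A (n+1)) (hPD _) β hβ0 K hKconv _ _ _ u _ hu (hproj _ hmem).1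
        (hy (n+1)) (hproj _ hmem).2
      have h4 := logdet_step (A n) (hPD n) (g' (n+1) (w (n+1)))
      rw [← hA] at h4
      have h5 : ⟪w (n+1) - u, Matrix.toEuclideanLin (A (n+1)) (w (n+1) - u)⟫ =
          ⟪w (n+1) - u, Matrix.toEuclideanLin (A n) (w (n+1) - u)⟫ +
            ⟪g' (n+1) (w (n+1)), w (n+1) - u⟫^2 := by
        rw [inner_lin_aux, inner_lin_aux, hA, Matrix.add_mulVec, dotProduct_add,
          Matrix.vecMulVec_mulVec, EuclideanSpace.inner_eq_star_dotProduct, star_trivial,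
          dotProduct_comm (WithLp.ofLp (g' (n+1) (w (n+1))))]
        simp [dotProduct_smul, pow_two]
      have h6 : ⟪g' (n+1) (w (n+1)), u - w (n+1)⟫ = - ⟪g' (n+1) (w (n+1)), w (n+1) - u⟫ := by
        rw [← inner_neg_right, neg_sub]
      rw [h6] at h2
      have h7 := mul_le_mul_of_nonneg_left h4 (by positivity : 0 ≤ 1/(2*β))
      rw [h5] at h3
      linarith
  have hc : 0 < 1/(β^2*D^2) := by positivity
  have htr := trace_bound A (fun t => g' t (w t)) _ L T hA0 hA
    (fun t ht => hgL t ht _ (hwK t ht)) T le_rfl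
  have hd' : (1:ℝ) ≤ d := by exact_mod_cast hd
  have hlogT := logdet_le (A T) (hPD T) (1/(β^2*D^2) + T * L^2) (by positivity) (htr.trans (by
    have : 0 ≤ T * L^2 := by positivity
    nlinarith))
  have hlog0 : Real.log (A 0).det = d * Real.log (1/(β^2*D^2)) := by
    rw [hA0, Matrix.det_smul, Matrix.det_one, mul_one, Real.log_pow, Fintype.card_fin]
  have hlog : Real.log (A T).det - Real.log (A 0).det ≤
      d * Real.log (1 + T * (L * β * D)^2) := by
    have : 1 + T * (L * β * D)^2 = (1/(β^2*D^2) + T * L^2) / (1/(β^2*D^2)) := by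
      field_simp
    rw [this, Real.log_div (by positivity) (by positivity), hlog0]
    linarith
  have hinit : ⟪w 1 - u, Matrix.toEuclideanLin (A 0) (w 1 - u)⟫ ≤ 1/β^2 := by
    rw [inner_lin_aux, hA0, Matrix.smul_mulVec, Matrix.one_mulVec, dotProduct_smul]
    have h3 : (w 1 - u).ofLp ⬝ᵥ (w 1 - u).ofLp = ‖w 1 - u‖^2 := by
      rw [← real_inner_self_eq_norm_sq, EuclideanSpace.inner_eq_star_dotProduct, star_trivial]
    rw [h3, smul_eq_mul]
    have := pow_le_pow_left₀ (norm_nonneg _) (hdiam _ hw1 u hu) 2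
    calc 1/(β^2*D^2) * ‖w 1 - u‖^2 ≤ 1/(β^2*D^2) * D^2 := by gcongr
      _ = 1/β^2 := by field_simp
  have hend : 0 ≤ ⟪w (T+1) - u, Matrix.toEuclideanLin (A T) (w (T+1) - u)⟫ := by
    rw [inner_lin_aux]
    simpa using (hPD T).posSemidef.dotProduct_mulVec_nonneg (w (T+1) - u).ofLp
  apply final_arith d hd α L D β hα hL hD hβ hβ0 T hT
  refine (hmain T le_rfl).trans ?_
  have e1 := mul_le_mul_of_nonneg_left hlog (by positivity : 0 ≤ 1/(2*β))
  have e2 := mul_le_mul_of_nonneg_left (show ⟪w 1 - u, Matrix.toEuclideanLin (A 0) (w 1 - u)⟫ -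
        ⟪w (T+1) - u, Matrix.toEuclideanLin (A T) (w (T+1) - u)⟫ ≤ 1/β^2 by linarith)
        (by positivity : 0 ≤ β/2)
  have e3 : β/2 * (1/β^2) = 1/(2*β) := by field_simp
  rw [mul_add, mul_one]
  linarith
end
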